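/- arXiv:1506.05773 — 3 statements merged into one kernel-verified Lean document; each statement's English description precedes it below -/
import Mathlib

section
/- Uniqueness of Laurent-series representations of a function: Fix a real number q > 1 and let a : ℤ → ℂ. Suppose there exists a nonempty open set U ⊆ ℂ such that for every s ∈ U the family (|a_m| · q^{−Re(s)·m})_{m∈ℤ} is summable and Σ_{m∈ℤ} a_m · q^{−s·m} = 0, where q^{−s·m} = exp(−s·m·log q). Then a_m = 0 for every m ∈ ℤ. -/
/-!
Put `z = q^{-s}`. Near a point of a nonempty open subset of its domain of absolute convergence, the
series is a Laurent series in `z` converging absolutely on an open annulus, hence analytic there.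
Its zeros accumulate at a point of that annulus, so by the identity theorem it vanishes on the
circle about `0` through that point. Integrating `z ^ (-n - 1)` times the sum over this circle
returns `2πi` times the `n`-th coefficient, which is therefore zero.
-/

open Complex Filter Metric Set
open scoped Real Topology

theorem zpow_le_zpow_add_zpow {K : Type*} [Field K] [LinearOrder K] [IsStrictOrderedRing K]
    {r x R : K} (hr : 0 < r) (hrx : r ≤ x) (hxR : x ≤ R) (m : ℤ) : x ^ m ≤ r ^ m + R ^ m := by
  have hx : 0 < x := hr.trans_le hrx
  rcases le_total 0 m with hm | hm
  · exact (zpow_le_zpow_left₀ hm hx.le hxR).trans (le_add_of_nonneg_left (zpow_nonneg hr.le m))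
  · have hxr : x ^ m ≤ r ^ m := by
      simpa only [inv_zpow', neg_neg] using
        zpow_le_zpow_left₀ (neg_nonneg.2 hm) (inv_nonneg.2 hx.le) (inv_anti₀ hr hrx)
    exact hxr.trans (le_add_of_nonneg_right (zpow_nonneg (hx.le.trans hxR) m))

theorem eventually_nhds_norm {F : Type*} [NormedAddCommGroup F] [NormedSpace ℝ F] {p : ℝ → Prop}
    {x : F} (hx : x ≠ 0) (hp : ∀ᶠ y in 𝓝 x, p ‖y‖) : ∀ᶠ t in 𝓝 ‖x‖, p t := by
  have hx' : 0 < ‖x‖ := norm_pos_iff.2 hx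
  have hray : Tendsto (fun t : ℝ ↦ (t / ‖x‖) • x) (𝓝 ‖x‖) (𝓝 x) := by
    have hcont : Continuous fun t : ℝ ↦ (t / ‖x‖) • x := by fun_prop
    simpa [div_self hx'.ne'] using hcont.tendsto ‖x‖
  filter_upwards [hray.eventually hp, lt_mem_nhds hx'] with t ht ht0
  simpa [norm_smul, abs_of_pos ht0, hx] using ht

section LaurentSeries

variable {E : Type*} [NormedAddCommGroup E] [NormedSpace ℂ E]

/-- The sum at `z` of the Laurent series centred at `0` with coefficients `a`; it is `0` by
convention where the series is not unconditionally summable, and `a 0` at `z = 0`, since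
`0 ^ m = 0` also for `m < 0`. -/
noncomputable def laurentSum (a : ℤ → E) (z : ℂ) : E :=
  ∑' m : ℤ, z ^ m • a m

variable [CompleteSpace E]

theorem hasSum_circleIntegral_of_summable_bound {ι : Type*} [Countable ι] {F : ι → ℂ → E}
    {u : ι → ℝ} {c : ℂ} {R : ℝ} (hR : 0 ≤ R) (hu : Summable u)
    (hF : ∀ i, ContinuousOn (F i) (sphere c R)) (hFu : ∀ i, ∀ z ∈ sphere c R, ‖F i z‖ ≤ u i) :
    HasSum (fun i ↦ ∮ z in C(c, R), F i z) (∮ z in C(c, R), ∑' i, F i z) := by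
  have hpartial (s : Finset ι) : ContinuousOn (fun z ↦ ∑ i ∈ s, F i z) (sphere c R) :=
    continuousOn_finsetSum s fun i _ ↦ hF i
  have hlim := (tendstoUniformlyOn_tsum hu hFu).tendsto_circleIntegral_of_continuousOn hR
    (.of_forall hpartial)
  simpa only [HasSum, SummationFilter.unconditional_filter,
    circleIntegral.integral_fun_sum fun i _ ↦ (hF i).circleIntegrable hR] using hlim

theorem circleIntegral_zpow_smul {R : ℝ} (hR : R ≠ 0) (n : ℤ) (e : E) :
    (∮ z in C(0, R), z ^ n • e) = if n = -1 then (2 * π * I) • e else 0 := by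
  rw [circleIntegral.integral_smul_const]
  split_ifs with hn
  · simpa [hn] using congrArg (· • e) (circleIntegral.integral_sub_center_inv 0 hR)
  · simpa using congrArg (· • e) (circleIntegral.integral_sub_zpow_of_ne hn 0 0 R)

theorem circleIntegral_zpow_smul_laurentSum {a : ℤ → E} {R : ℝ} (hR : 0 < R)
    (ha : Summable fun m ↦ ‖a m‖ * R ^ m) (n : ℤ) :
    (∮ z in C(0, R), z ^ (-n - 1) • laurentSum a z) = (2 * π * I) • a n := by
  have hne {z : ℂ} (hz : z ∈ sphere 0 R) : z ≠ 0 := ne_of_mem_sphere hz hR.ne'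
  have hterm {z : ℂ} (hz : z ∈ sphere 0 R) (m : ℤ) :
      z ^ (-n - 1) • z ^ m • a m = z ^ (m - n - 1) • a m := by
    rw [smul_smul, ← zpow_add₀ (hne hz)]
    ring_nf
  have hnorm (m : ℤ) {z : ℂ} (hz : z ∈ sphere 0 R) :
      ‖z ^ (m - n - 1) • a m‖ = R ^ (-n - 1) * (‖a m‖ * R ^ m) := by
    rw [← hterm hz, norm_smul, norm_smul, norm_zpow, norm_zpow, mem_sphere_zero_iff_norm.1 hz,
      mul_comm ‖a m‖]
  have hsum : HasSum (fun m ↦ ∮ z in C(0, R), z ^ (m - n - 1) • a m)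
      (∮ z in C(0, R), ∑' m : ℤ, z ^ (m - n - 1) • a m) :=
    hasSum_circleIntegral_of_summable_bound hR.le (ha.mul_left (R ^ (-n - 1)))
      (fun m z hz ↦ (continuousAt_zpow₀ z _ (.inl (hne hz))).continuousWithinAt.smul
        continuousWithinAt_const)
      fun m z hz ↦ (hnorm m hz).le
  calc (∮ z in C(0, R), z ^ (-n - 1) • laurentSum a z)
      = ∮ z in C(0, R), ∑' m : ℤ, z ^ (m - n - 1) • a m :=
        circleIntegral.integral_congr hR.le fun z hz ↦ by
          simp only [laurentSum, ← tsum_const_smul'', hterm hz]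
    _ = ∑' m : ℤ, if m = n then (2 * π * I) • a n else 0 := by
        rw [← hsum.tsum_eq]
        refine tsum_congr fun m ↦ ?_
        rw [circleIntegral_zpow_smul hR.ne']
        grind
    _ = (2 * π * I) • a n := tsum_ite_eq n _

theorem eq_zero_of_eqOn_sphere_laurentSum {a : ℤ → E} {R : ℝ} (hR : 0 < R)
    (ha : Summable fun m ↦ ‖a m‖ * R ^ m) (hzero : EqOn (laurentSum a) 0 (sphere 0 R)) :
    a = 0 := by
  ext n
  have hcoeff : (2 * π * I) • a n = ∮ _ in C(0, R), (0 : E) := by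
    rw [← circleIntegral_zpow_smul_laurentSum hR ha]
    exact circleIntegral.integral_congr hR.le fun z hz ↦ by simp [hzero hz]
  simpa [circleIntegral, two_pi_I_ne_zero] using hcoeff

theorem differentiableOn_laurentSum {a : ℤ → E} {r R : ℝ} (hr : 0 < r)
    (har : Summable fun m ↦ ‖a m‖ * r ^ m) (haR : Summable fun m ↦ ‖a m‖ * R ^ m) :
    DifferentiableOn ℂ (laurentSum a) (norm ⁻¹' Ioo r R) := by
  refine differentiableOn_tsum_of_summable_norm (har.add haR) (fun m z hz ↦ ?_)
    (isOpen_Ioo.preimage continuous_norm) fun m z hz ↦ ?_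
  · have hz0 : z ≠ 0 := norm_pos_iff.1 (hr.trans hz.1)
    exact ((differentiableAt_zpow.2 (.inl hz0)).smul_const _).differentiableWithinAt
  · rw [norm_smul, norm_zpow, mul_comm, ← mul_add]
    gcongr
    exact zpow_le_zpow_add_zpow hr hz.1.le hz.2.le m

theorem analyticOnNhd_laurentSum_sphere {a : ℤ → E} {ρ : ℝ} (hρ : 0 < ρ)
    (ha : ∀ᶠ t in 𝓝 ρ, Summable fun m ↦ ‖a m‖ * t ^ m) :
    AnalyticOnNhd ℂ (laurentSum a) (sphere 0 ρ) := by
  obtain ⟨r, har, hr, hrρ⟩ := ((ha.filter_mono nhdsWithin_le_nhds).and (Ioo_mem_nhdsLT hρ)).exists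
  obtain ⟨R, haR, hρR⟩ :=
    ((ha.filter_mono nhdsWithin_le_nhds).and (self_mem_nhdsWithin (s := Ioi ρ))).exists
  refine ((differentiableOn_laurentSum hr har haR).analyticOnNhd
    (isOpen_Ioo.preimage continuous_norm)).mono fun z hz ↦ ?_
  rw [mem_preimage, mem_sphere_zero_iff_norm.1 hz]
  exact ⟨hrρ, hρR⟩

theorem eq_zero_of_frequently_laurentSum_eq_zero {a : ℤ → E} {z₀ : ℂ} (hz₀ : z₀ ≠ 0)
    (ha : ∀ᶠ z in 𝓝 z₀, Summable fun m ↦ ‖a m‖ * ‖z‖ ^ m)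
    (hzero : ∃ᶠ z in 𝓝[≠] z₀, laurentSum a z = 0) : a = 0 := by
  have hanalytic : AnalyticOnNhd ℂ (laurentSum a) (sphere 0 ‖z₀‖) :=
    analyticOnNhd_laurentSum_sphere (norm_pos_iff.2 hz₀)
      (eventually_nhds_norm (p := fun t ↦ Summable fun m ↦ ‖a m‖ * t ^ m) hz₀ ha)
  have hsphere : IsPreconnected (sphere (0 : ℂ) ‖z₀‖) :=
    isPreconnected_sphere (by simp [rank_real_complex]) 0 _
  exact eq_zero_of_eqOn_sphere_laurentSum (norm_pos_iff.2 hz₀) ha.self_of_nhds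
    (hanalytic.eqOn_zero_of_preconnected_of_frequently_eq_zero hsphere (by simp) hzero)

end LaurentSeries

theorem norm_exp_neg_mul_log_zpow {q : ℝ} (hq : 0 < q) (s : ℂ) (m : ℤ) :
    ‖exp (-s * Real.log q)‖ ^ m = q ^ (-s.re * (m : ℝ)) := by
  rw [norm_exp, re_mul_ofReal, neg_re, mul_comm, ← Real.rpow_def_of_pos hq,
    Real.rpow_mul_intCast hq.le]

theorem laurentSum_exp_neg_mul_log {E : Type*} [NormedAddCommGroup E] [NormedSpace ℂ E]
    (q : ℝ) (a : ℤ → E) (s : ℂ) :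
    laurentSum a (exp (-s * Real.log q)) = ∑' m : ℤ, exp (-(s * m) * Real.log q) • a m := by
  refine tsum_congr fun m ↦ ?_
  rw [← exp_int_mul]
  ring_nf

theorem laurent_series_representation_unique_general {E : Type*} [NormedAddCommGroup E]
    [NormedSpace ℂ E] [CompleteSpace E] {q : ℝ} (hq₀ : 0 < q) (hq₁ : q ≠ 1) {a : ℤ → E} {s₀ : ℂ}
    (habs : ∀ᶠ s in 𝓝 s₀, Summable fun m : ℤ ↦ ‖a m‖ * q ^ (-s.re * (m : ℝ)))
    (hval : ∃ᶠ s in 𝓝[≠] s₀, ∑' m : ℤ, exp (-(s * m) * Real.log q) • a m = 0) : a = 0 := by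
  have hderiv : HasStrictDerivAt (fun s : ℂ ↦ exp (-s * Real.log q))
      (exp (-s₀ * Real.log q) * (-1 * Real.log q)) s₀ :=
    ((hasStrictDerivAt_id s₀).neg.mul_const _).cexp
  have hderiv_ne : exp (-s₀ * Real.log q) * (-1 * Real.log q) ≠ 0 := by
    simp [Real.log_ne_zero_of_pos_of_ne_one hq₀ hq₁]
  refine eq_zero_of_frequently_laurentSum_eq_zero (exp_ne_zero (-s₀ * Real.log q)) ?_ ?_
  · rw [← hderiv.map_nhds_eq hderiv_ne, eventually_map]
    simpa only [norm_exp_neg_mul_log_zpow hq₀] using habs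
  · simp only [← laurentSum_exp_neg_mul_log] at hval
    exact (hderiv.hasDerivAt.tendsto_nhdsNE hderiv_ne).frequently hval

/-- Uniqueness of Laurent-series representations: if `q > 1` and the doubly infinite
series `Σ_{m∈ℤ} a_m q^{-s m}` converges absolutely and vanishes for every `s` in some
nonempty open set `U ⊆ ℂ`, then all coefficients `a_m` vanish.
Here `q^{-s m} = exp(-s m log q)` and absolute convergence means summability of
`|a_m| q^{-Re(s) m}`. -/
theorem laurent_series_representation_unique (q : ℝ) (hq : 1 < q) (a : ℤ → ℂ)
    (U : Set ℂ) (hU : IsOpen U) (hUne : U.Nonempty)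
    (habs : ∀ s ∈ U, Summable fun m : ℤ => ‖a m‖ * q ^ (-(s.re) * (m : ℝ)))
    (hval : ∀ s ∈ U,
      ∑' m : ℤ, a m * Complex.exp (-(s * (m : ℂ)) * (Real.log q : ℂ)) = 0) :
    ∀ m : ℤ, a m = 0 := by
  obtain ⟨s₀, hs₀⟩ := hUne
  have hmem : ∀ᶠ s in 𝓝 s₀, s ∈ U := hU.mem_nhds hs₀
  have hzero : ∀ᶠ s in 𝓝 s₀, ∑' m : ℤ, exp (-(s * m) * Real.log q) • a m = 0 :=
    hmem.mono fun s hs ↦ by simpa only [smul_eq_mul, mul_comm (exp _)] using hval s hs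
  exact congrFun (laurent_series_representation_unique_general (zero_lt_one.trans hq) hq.ne'
    (hmem.mono habs) (hzero.filter_mono nhdsWithin_le_nhds).frequently)
end

section
/- Series representation of an integral under simple supports: Let (Γ, μ) be a measure space and φ : Γ → ℂ[X, X⁻¹] a map such that for every m ∈ ℤ the function x ↦ coeff_m(φ(x)) is measurable, and such that Γ is divided into the simple supports of φ, i.e. for every x ∈ Γ the Laurent polynomial φ(x) is either 0 or a monomial (supp(φ(x)) has at most one element). Let z ∈ ℂ, z ≠ 0, and assume ∫_Γ |ev_z(φ(x))| dμ(x) < ∞. Then: (i) ∫_Γ |coeff_m(φ(x))| dμ(x) < ∞ for every m ∈ ℤ; (ii) Σ_{m∈ℤ} |z|^m ∫_Γ |coeff_m(φ(x))| dμ(x) < ∞; (iii) Σ_{m∈ℤ} z^m ∫_Γ coeff_m(φ(x)) dμ(x) = ∫_Γ ev_z(φ(x)) dμ(x). -/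
open MeasureTheory

/-- Evaluation of a Laurent polynomial `p ∈ ℂ[X, X⁻¹]` (modelled as `ℤ →₀ ℂ`)
at a nonzero complex number `z`: `ev_z(p) = Σ_m coeff_m(p) z^m` (a finite sum). -/
noncomputable def evz (z : ℂ) (p : ℤ →₀ ℂ) : ℂ :=
  p.sum fun m a => a * z ^ m

/-!
When at most one term of a sum is nonzero, the norm of the sum is the sum of the norms. Hence, when
`φ` has simple supports, `∑ m, ‖φ x m * z ^ m‖ = ‖evz z (φ x)‖` for every `x`, so
`‖evz z (φ x)‖` is itself an integrable majorant of the evaluation series. Dominated convergence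
then integrates both this series and the series of its norms term by term.
-/

theorem hasSum_norm_of_subsingleton_support {ι E : Type*} [NormedAddCommGroup E] {f : ι → E} {a : E}
    (hf : f.support.Subsingleton) (ha : HasSum f a) : HasSum (fun i => ‖f i‖) ‖a‖ := by
  rcases hf.eq_empty_or_singleton with hempty | ⟨i, hi⟩
  · obtain rfl : f = 0 := Function.support_eq_empty_iff.mp hempty
    obtain rfl : a = 0 := ha.unique hasSum_zero
    simp
  · have hzero : ∀ j, j ≠ i → f j = 0 := fun j hj => by
      simpa using (hi ▸ hj : j ∉ f.support)
    obtain rfl : a = f i := ha.unique (hasSum_single i hzero)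
    exact hasSum_single i fun j hj => by simp [hzero j hj]

section SumOfIntegrals

variable {α ι E : Type*} [MeasurableSpace α] {μ : Measure α} [NormedAddCommGroup E]
  {f : ι → α → E} {g : α → ℝ}

theorem integrable_of_hasSum_norm {i : ι} (hf : AEStronglyMeasurable (f i) μ)
    (hg : Integrable g μ) (hnorm : ∀ᵐ x ∂μ, HasSum (fun j => ‖f j x‖) (g x)) :
    Integrable (f i) μ :=
  hg.mono' hf <| hnorm.mono fun _ hx => le_hasSum hx i fun _ _ => norm_nonneg _

theorem hasSum_integral_of_hasSum_norm [NormedSpace ℝ E] [Countable ι] {s : α → E}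
    (hf : ∀ i, AEStronglyMeasurable (f i) μ) (hg : Integrable g μ)
    (hnorm : ∀ᵐ x ∂μ, HasSum (fun i => ‖f i x‖) (g x))
    (hs : ∀ᵐ x ∂μ, HasSum (fun i => f i x) (s x)) :
    HasSum (fun i => ∫ x, f i x ∂μ) (∫ x, s x ∂μ) := by
  have htsum : g =ᵐ[μ] fun x => ∑' i, ‖f i x‖ := hnorm.mono fun _ hx => hx.tsum_eq.symm
  exact hasSum_integral_of_dominated_convergence (fun i x => ‖f i x‖) hf
    (fun _ => ae_of_all _ fun _ => le_rfl) (hnorm.mono fun _ hx => hx.summable)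
    (hg.congr htsum) hs

theorem hasSum_integral_norm_of_hasSum_norm [Countable ι]
    (hf : ∀ i, AEStronglyMeasurable (f i) μ) (hg : Integrable g μ)
    (hnorm : ∀ᵐ x ∂μ, HasSum (fun i => ‖f i x‖) (g x)) :
    HasSum (fun i => ∫ x, ‖f i x‖ ∂μ) (∫ x, g x ∂μ) :=
  hasSum_integral_of_hasSum_norm (fun i => (hf i).norm) hg (by simpa only [norm_norm]) hnorm

end SumOfIntegrals

theorem hasSum_evz (z : ℂ) (p : ℤ →₀ ℂ) : HasSum (fun m => p m * z ^ m) (evz z p) :=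
  hasSum_sum_of_ne_finset_zero fun m hm => by
    rw [Finsupp.notMem_support_iff.mp hm, zero_mul]

theorem hasSum_norm_evz (z : ℂ) {p : ℤ →₀ ℂ} (hp : p.support.card ≤ 1) :
    HasSum (fun m => ‖p m * z ^ m‖) ‖evz z p‖ := by
  have hsub : (Function.support p).Subsingleton := by
    simpa only [Finsupp.fun_support_eq] using Finset.card_le_one_iff_subsingleton.mp hp
  exact hasSum_norm_of_subsingleton_support
    (hsub.anti (Function.support_mul_subset_left _ _)) (hasSum_evz z p)

/-- Series representation of an integral under simple supports: if every `φ x` is zero or a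
monomial, each coefficient function is measurable, and `x ↦ ev_z(φ x)` is absolutely
integrable, then every coefficient function is absolutely integrable, the coefficient series
is strongly convergent at `z`, and its value at `z` equals the integral of `ev_z ∘ φ`. -/
theorem series_represents_integral_of_simple_supports
    {Γ : Type*} [MeasurableSpace Γ] (μ : Measure Γ) (φ : Γ → ℤ →₀ ℂ)
    (hmeas : ∀ m : ℤ, Measurable fun x => φ x m)
    (hsimple : ∀ x : Γ, (φ x).support.card ≤ 1)
    (z : ℂ) (hz : z ≠ 0)
    (hint : Integrable (fun x => evz z (φ x)) μ) :
    (∀ m : ℤ, Integrable (fun x => φ x m) μ) ∧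
    (Summable fun m : ℤ => ‖z‖ ^ m * ∫ x, ‖φ x m‖ ∂μ) ∧
    ∑' m : ℤ, z ^ m * ∫ x, φ x m ∂μ = ∫ x, evz z (φ x) ∂μ := by
  have hterm : ∀ m : ℤ, AEStronglyMeasurable (fun x => φ x m * z ^ m) μ := fun m =>
    ((hmeas m).mul_const _).aestronglyMeasurable
  have hnorm : ∀ᵐ x ∂μ, HasSum (fun m => ‖φ x m * z ^ m‖) ‖evz z (φ x)‖ :=
    ae_of_all _ fun x => hasSum_norm_evz z (hsimple x)
  refine ⟨fun m => ?integrable, ?summable, ?integral_eq⟩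
  case integrable =>
    exact (integrable_mul_const_iff (zpow_ne_zero m hz).isUnit _).mp
      (integrable_of_hasSum_norm (f := fun m x => φ x m * z ^ m) (hterm m) hint.norm hnorm)
  case summable =>
    simpa only [norm_mul, norm_zpow, mul_comm, integral_const_mul] using
      (hasSum_integral_norm_of_hasSum_norm hterm hint.norm hnorm).summable
  case integral_eq =>
    simpa only [mul_comm, integral_const_mul] using
      (hasSum_integral_of_hasSum_norm hterm hint.norm hnorm
        (ae_of_all _ fun x => hasSum_evz z (φ x))).tsum_eq
end

section
/- Multivariate series representation of an integral under simple supports: Fix k ≥ 1. Let (Γ, μ) be a measure space and φ : Γ → ℂ[X₁^{±1}, …, X_k^{±1}] a map such that for every m ∈ ℤ^k the function x ↦ coeff_m(φ(x)) is measurable, and such that for every x ∈ Γ the value φ(x) is either 0 or a monomial (at most one m ∈ ℤ^k has coeff_m(φ(x)) ≠ 0). Let z = (z₁, …, z_k) ∈ (ℂ \ {0})^k, and for p write ev_z(p) = Σ_{m∈ℤ^k} coeff_m(p) · z₁^{m₁}⋯z_k^{m_k} (a finite sum). Assume ∫_Γ |ev_z(φ(x))| dμ(x) < ∞. Then: (i)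 ∫_Γ |coeff_m(φ(x))| dμ(x) < ∞ for every m ∈ ℤ^k; (ii) Σ_{m∈ℤ^k} |z₁|^{m₁}⋯|z_k|^{m_k} ∫_Γ |coeff_m(φ(x))| dμ(x) < ∞; (iii) Σ_{m∈ℤ^k} z₁^{m₁}⋯z_k^{m_k} ∫_Γ coeff_m(φ(x)) dμ(x) = ∫_Γ ev_z(φ(x)) dμ(x). -/
open MeasureTheory

/-- Evaluation of a multivariate Laurent polynomial `p ∈ ℂ[X₁^{±1}, …, X_k^{±1}]`
(modelled as `(Fin k → ℤ) →₀ ℂ`) at a tuple `z` of nonzero complex numbers: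
`ev_z(p) = Σ_m coeff_m(p) · z₁^{m₁} ⋯ z_k^{m_k}` (a finite sum). -/
noncomputable def evzk {k : ℕ} (z : Fin k → ℂ) (p : (Fin k → ℤ) →₀ ℂ) : ℂ :=
  p.sum fun m a => a * ∏ i, z i ^ m i

/-!
Where at most one term of `∑ m, φ x m • w m` is nonzero, the triangle inequality is an equality:
the norm of the sum is the sum of the norms. So the integrable function `‖∑ m, φ x m • w m‖`
dominates every finite sum of the `‖φ x m • w m‖`, which bounds the partial sums of the integrals
of these norms and allows termwise integration.
-/

section Finsupp

variable {ι M E : Type*} [Zero M]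

theorem hasSum_finsuppSum [AddCommMonoid E] [TopologicalSpace E] (p : ι →₀ M) (h : ι → M → E)
    (h_zero : ∀ i, h i 0 = 0) : HasSum (fun i => h i (p i)) (p.sum h) :=
  hasSum_sum_of_ne_finset_zero fun i hi => by
    rw [Finsupp.notMem_support_iff.mp hi, h_zero]

variable [SeminormedAddCommGroup E]

theorem norm_sum_of_card_le_one {s : Finset ι} (hs : s.card ≤ 1) (f : ι → E) :
    ‖∑ i ∈ s, f i‖ = ∑ i ∈ s, ‖f i‖ := by
  rcases Nat.le_one_iff_eq_zero_or_eq_one.mp hs with h_card | h_card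
  · simp [Finset.card_eq_zero.mp h_card]
  · obtain ⟨i, rfl⟩ := Finset.card_eq_one.mp h_card
    simp

theorem sum_norm_le_norm_finsuppSum {p : ι →₀ M} (hp : p.support.card ≤ 1) (h : ι → M → E)
    (h_zero : ∀ i, h i 0 = 0) (s : Finset ι) : ∑ i ∈ s, ‖h i (p i)‖ ≤ ‖p.sum h‖ := by
  have h_norm : HasSum (fun i => ‖h i (p i)‖) (p.sum fun i a => ‖h i a‖) :=
    hasSum_finsuppSum p (fun i a => ‖h i a‖) fun i => by rw [h_zero, norm_zero]
  calc ∑ i ∈ s, ‖h i (p i)‖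
      ≤ p.sum fun i a => ‖h i a‖ := sum_le_hasSum s (fun _ _ => norm_nonneg _) h_norm
    _ = ‖p.sum h‖ := (norm_sum_of_card_le_one hp _).symm

end Finsupp

section Integral

variable {Γ ι E : Type*} [MeasurableSpace Γ] {μ : Measure Γ} [NormedAddCommGroup E]

theorem summable_integral_norm_of_sum_norm_le {F : ι → Γ → E} {g : Γ → ℝ}
    (hF : ∀ i, Integrable (F i) μ) (hg : Integrable g μ)
    (hFg : ∀ s : Finset ι, ∀ᵐ x ∂μ, ∑ i ∈ s, ‖F i x‖ ≤ g x) :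
    Summable fun i => ∫ x, ‖F i x‖ ∂μ := by
  refine summable_of_sum_le (c := ∫ x, g x ∂μ)
    (fun i => integral_nonneg fun x => norm_nonneg _) fun s => ?_
  calc ∑ i ∈ s, ∫ x, ‖F i x‖ ∂μ
      = ∫ x, ∑ i ∈ s, ‖F i x‖ ∂μ := (integral_finsetSum s fun i _ => (hF i).norm).symm
    _ ≤ ∫ x, g x ∂μ :=
        integral_mono_ae (integrable_finsetSum s fun i _ => (hF i).norm) hg (hFg s)

theorem multivariate_series_represents_integral_of_simple_supports_general
    {𝕜 : Type*} [RCLike 𝕜] [NormedSpace 𝕜 E] [NormedSpace ℝ E] [CompleteSpace E] [Countable ι]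
    {φ : Γ → ι →₀ 𝕜} (hmeas : ∀ m, AEStronglyMeasurable (fun x => φ x m) μ)
    (hsimple : ∀ᵐ x ∂μ, (φ x).support.card ≤ 1) (w : ι → E)
    (hint : Integrable (fun x => Finsupp.linearCombination 𝕜 w (φ x)) μ) :
    (∀ m, w m ≠ 0 → Integrable (fun x => φ x m) μ) ∧
    (Summable fun m => ‖w m‖ * ∫ x, ‖φ x m‖ ∂μ) ∧
    HasSum (fun m => (∫ x, φ x m ∂μ) • w m) (∫ x, Finsupp.linearCombination 𝕜 w (φ x) ∂μ) := by
  have h_dom : ∀ s : Finset ι, ∀ᵐ x ∂μ,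
      ∑ m ∈ s, ‖φ x m • w m‖ ≤ ‖Finsupp.linearCombination 𝕜 w (φ x)‖ := fun s =>
    hsimple.mono fun x hx =>
      sum_norm_le_norm_finsuppSum hx (fun m a => a • w m) (fun m => zero_smul 𝕜 (w m)) s
  have h_term : ∀ m, Integrable (fun x => φ x m • w m) μ := fun m =>
    hint.norm.mono' ((hmeas m).smul_const (w m)) (by simpa using h_dom {m})
  have h_summable : Summable fun m => ∫ x, ‖φ x m • w m‖ ∂μ :=
    summable_integral_norm_of_sum_norm_le h_term hint.norm h_dom
  have h_tsum : ∀ x, ∑' m, φ x m • w m = Finsupp.linearCombination 𝕜 w (φ x) := fun x =>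
    (hasSum_finsuppSum (φ x) (fun m a => a • w m) fun m => zero_smul 𝕜 (w m)).tsum_eq
  refine ⟨fun m hm => (integrable_smul_const hm).mp (h_term m), ?_, ?_⟩
  · simpa only [norm_smul, integral_mul_const, mul_comm ‖w _‖] using h_summable
  · simpa only [h_tsum, integral_smul_const] using
      hasSum_integral_of_summable_integral_norm h_term h_summable

end Integral

theorem evzk_eq_linearCombination {k : ℕ} (z : Fin k → ℂ) (p : (Fin k → ℤ) →₀ ℂ) :
    evzk z p = Finsupp.linearCombination ℂ (fun m => ∏ i, z i ^ m i) p := by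
  simp only [evzk, Finsupp.linearCombination_apply, smul_eq_mul]

/-- Multivariate series representation of an integral under simple supports: if every
`φ x` is zero or a monomial, each coefficient function is measurable, and
`x ↦ ev_z(φ x)` is absolutely integrable, then every coefficient function is absolutely
integrable, the coefficient series is strongly convergent at `z`, and its value at `z`
equals the integral of `ev_z ∘ φ`. -/
theorem multivariate_series_represents_integral_of_simple_supports
    {Γ : Type*} [MeasurableSpace Γ] {k : ℕ} (hk : 1 ≤ k)
    (μ : Measure Γ) (φ : Γ → (Fin k → ℤ) →₀ ℂ)
    (hmeas : ∀ m : Fin k → ℤ, Measurable fun x => φ x m)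
    (hsimple : ∀ x : Γ, (φ x).support.card ≤ 1)
    (z : Fin k → ℂ) (hz : ∀ i, z i ≠ 0)
    (hint : Integrable (fun x => evzk z (φ x)) μ) :
    (∀ m : Fin k → ℤ, Integrable (fun x => φ x m) μ) ∧
    (Summable fun m : Fin k → ℤ => (∏ i, ‖z i‖ ^ m i) * ∫ x, ‖φ x m‖ ∂μ) ∧
    ∑' m : Fin k → ℤ, (∏ i, z i ^ m i) * ∫ x, φ x m ∂μ = ∫ x, evzk z (φ x) ∂μ := by
  simp only [evzk_eq_linearCombination] at hint ⊢
  obtain ⟨h_coeff, h_summable, h_hasSum⟩ :=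
    multivariate_series_represents_integral_of_simple_supports_general
      (fun m => (hmeas m).aestronglyMeasurable) (.of_forall hsimple) (fun m => ∏ i, z i ^ m i) hint
  refine ⟨fun m => h_coeff m (Finset.prod_ne_zero_iff.mpr fun i _ => zpow_ne_zero _ (hz i)), ?_, ?_⟩
  · simpa only [norm_prod, norm_zpow] using h_summable
  · simpa only [smul_eq_mul, mul_comm] using h_hasSum.tsum_eq
end
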